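/- Let S be a finite semigroup such that S * S = S (every element of S is a product of two elements) and such that for every idempotent e ∈ S the local monoid eSe = { e * s * e | s ∈ S } is a group with identity e (i.e., every x = e * s * e has y = e * t * e with x * y = y * x = e). Then S has no proper semigroup ideal: every nonempty subset I ⊆ S satisfying s * a ∈ I and a * s ∈ I for all s ∈ S and a ∈ I equals S. -/

import Mathlib

/-!
Every element of `S` has the form `q * e * b` with `e` idempotent
(`exists_eq_mul_idempotent_mul`). Given a nonempty ideal `I` containing `i`, the element `e * i * e`
lies in `I` and is invertible in the group `eSe`, so `e ∈ I` and therefore `q * e * b ∈ I`.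

For the factorization of `x`, take a left factor `p` of `x` whose right ideal `p * S` is as small as
possible. Since `S * S = S`, `p` can be lengthened to a left factor `q = p * a`; minimality gives
`q * S = p * S ∋ q`, so the stabilizer `{c | q * c = q}` is a nonempty finite semigroup
and thus contains an idempotent.
-/

/-- Compactness in the discrete topology reduces this to the Ellis–Numakura lemma. -/
theorem exists_idempotent_mem_of_finite {S : Type*} [Semigroup S] [Finite S] (T : Set S)
    (hne : T.Nonempty) (hmul : ∀ a ∈ T, ∀ b ∈ T, a * b ∈ T) : ∃ e ∈ T, e * e = e := by
  letI : TopologicalSpace S := ⊥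
  haveI : DiscreteTopology S := ⟨rfl⟩
  exact exists_idempotent_in_compact_subsemigroup (fun _ => continuous_of_discreteTopology) T hne
    T.toFinite.isCompact hmul

theorem exists_eq_mul_idempotent_mul {S : Type*} [Semigroup S] [Finite S]
    (hSS : ∀ x : S, ∃ a b : S, x = a * b) (x : S) :
    ∃ q e b : S, e * e = e ∧ x = q * e * b := by
  obtain ⟨p, ⟨y, hy⟩, hmin⟩ := Set.exists_min_image {p : S | ∃ y, x = p * y}
    (fun p => (Set.range (p * ·)).ncard) (Set.toFinite _) (hSS x)
  obtain ⟨a, b, rfl⟩ := hSS y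
  have hsub : Set.range (p * a * ·) ⊆ Set.range (p * ·) := by
    rintro _ ⟨s, rfl⟩
    exact ⟨a * s, (mul_assoc p a s).symm⟩
  have heq : Set.range (p * a * ·) = Set.range (p * ·) :=
    Set.eq_of_subset_of_ncard_le hsub
      (hmin (p * a) ⟨b, by rw [hy, mul_assoc]⟩) (Set.toFinite _)
  obtain ⟨c, hc⟩ : p * a ∈ Set.range (p * a * ·) := heq ▸ ⟨a, rfl⟩
  obtain ⟨e, he, hee⟩ := exists_idempotent_mem_of_finite {c | p * a * c = p * a} ⟨c, hc⟩
    (fun u (hu : p * a * u = p * a) v (hv : p * a * v = p * a) =>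
      show p * a * (u * v) = p * a by rw [← mul_assoc, hu, hv])
  have he' : p * a * e = p * a := he
  exact ⟨p * a, e, b, hee, by rw [he', hy, mul_assoc]⟩

theorem localGroup_no_proper_ideal
    {S : Type*} [Semigroup S] [Fintype S] [Nonempty S]
    (hSS : ∀ x : S, ∃ a b : S, x = a * b)
    (hloc : ∀ e : S, e * e = e → ∀ s : S, ∃ t : S,
        (e * s * e) * (e * t * e) = e ∧ (e * t * e) * (e * s * e) = e) :
    ∀ I : Set S, I.Nonempty →
      (∀ s : S, ∀ a ∈ I, s * a ∈ I ∧ a * s ∈ I) → I = Set.univ := by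
  rintro I ⟨i, hi⟩ hI
  refine Set.eq_univ_of_forall fun x => ?_
  obtain ⟨q, e, b, hee, rfl⟩ := exists_eq_mul_idempotent_mul hSS x
  obtain ⟨t, ht, -⟩ := hloc e hee i
  have he : e ∈ I := ht ▸ (hI (e * t * e) _ (hI e _ (hI e i hi).1).2).2
  exact (hI b _ (hI q e he).1).2
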